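/- arXiv:2312.01782 — 5 statements merged into one kernel-verified Lean document; each statement's English description precedes it below -/
import Mathlib

section
/- Let n ≥ 1, let Q : ℝ → Matrix (Fin n) (Fin n) ℝ be a differentiable family of invertible matrices and let λ₁, …, λₙ : ℝ → ℝ be differentiable functions such that, for some fixed m, λ_i(t) = 0 for all i < m and λ_i(t) > 0 for all i ≥ m and all t. Set D(t) := diag(λ₁(t), …, λₙ(t)) and L(t) := Q(t)⁻¹ · D(t) · Q(t). Then for every t, d/dt log(∏_{i=m}^{n} λ_i(t)) = lim_{δ → 0⁺} tr(L'(t) · (L(t) + δ·I)⁻¹). -/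
open Matrix Filter


theorem aux_det_diff {n : ℕ} (A : ℝ → Matrix (Fin n) (Fin n) ℝ)
    (hA : ∀ i j, Differentiable ℝ fun t => A t i j) :
    Differentiable ℝ fun t => (A t).det := by
  simp only [Matrix.det_apply']
  refine Differentiable.fun_sum fun σ _ => ?_
  refine Differentiable.const_mul ?_ _
  refine Differentiable.fun_finsetProd fun i _ => hA _ _

theorem aux_inv_diff {n : ℕ} (A : ℝ → Matrix (Fin n) (Fin n) ℝ)
    (hA : ∀ i j, Differentiable ℝ fun t => A t i j) (hu : ∀ t, IsUnit (A t)) (i j : Fin n) :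
    Differentiable ℝ fun t => (A t)⁻¹ i j := by
  have h0 : ∀ t, (A t).det ≠ 0 := fun t =>
    ((Matrix.isUnit_iff_isUnit_det _).1 (hu t)).ne_zero
  simp only [Matrix.inv_def, Matrix.smul_apply, Ring.inverse_eq_inv', smul_eq_mul,
    Matrix.adjugate_apply]
  refine Differentiable.mul ((aux_det_diff A hA).inv h0) (aux_det_diff _ ?_)
  intro k l
  by_cases h : k = j
  · subst h
    simp
  · simpa [Matrix.updateRow_ne h] using hA k l

theorem aux_mul {n : ℕ} {A B : ℝ → Matrix (Fin n) (Fin n) ℝ} {A' B' : Matrix (Fin n) (Fin n) ℝ}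
    {t : ℝ} (hA : ∀ i j, HasDerivAt (fun s => A s i j) (A' i j) t)
    (hB : ∀ i j, HasDerivAt (fun s => B s i j) (B' i j) t) (i j : Fin n) :
    HasDerivAt (fun s => (A s * B s) i j) ((A' * B t + A t * B') i j) t := by
  simp only [Matrix.mul_apply, Matrix.add_apply, ← Finset.sum_add_distrib]
  exact HasDerivAt.fun_sum fun k _ => (hA i k).mul (hB k j)

/-- Derivative of the log of the product of the nonzero eigenvalues of a family
`L(t) = Q(t)⁻¹ D(t) Q(t)` of constant rank equals `lim_{δ→0⁺} tr(L'(t) (L(t)+δI)⁻¹)`. -/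
theorem deriv_log_prod_pos_eigenvalues
    (n m : ℕ) (hn : 1 ≤ n)
    (Q : ℝ → Matrix (Fin n) (Fin n) ℝ)
    (hQdiff : ∀ i j, Differentiable ℝ fun t => Q t i j)
    (hQinv : ∀ t, IsUnit (Q t))
    (lam : Fin n → ℝ → ℝ)
    (hlamdiff : ∀ i, Differentiable ℝ (lam i))
    (hlamzero : ∀ (t : ℝ) (i : Fin n), (i : ℕ) < m → lam i t = 0)
    (hlampos : ∀ (t : ℝ) (i : Fin n), m ≤ (i : ℕ) → 0 < lam i t)
    (D : ℝ → Matrix (Fin n) (Fin n) ℝ)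
    (hD : ∀ t, D t = Matrix.diagonal fun i => lam i t)
    (L : ℝ → Matrix (Fin n) (Fin n) ℝ)
    (hL : ∀ t, L t = (Q t)⁻¹ * D t * Q t)
    (t : ℝ) :
    Tendsto
      (fun δ : ℝ =>
        Matrix.trace
          ((Matrix.of fun i j => deriv (fun s => L s i j) t) *
            (L t + δ • (1 : Matrix (Fin n) (Fin n) ℝ))⁻¹))
      (nhdsWithin 0 (Set.Ioi 0))
      (nhds (deriv
        (fun s => Real.log
          (∏ i ∈ Finset.univ.filter (fun i : Fin n => m ≤ (i : ℕ)), lam i s)) t)) := by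
  have hdet : ∀ s, IsUnit (Q s).det := fun s => (Matrix.isUnit_iff_isUnit_det _).1 (hQinv s)
  obtain ⟨Q', hQ'⟩ : ∃ Q' : Matrix (Fin n) (Fin n) ℝ,
      ∀ i j, HasDerivAt (fun s => Q s i j) (Q' i j) t :=
    ⟨Matrix.of fun i j => deriv (fun s => Q s i j) t, fun i j => (hQdiff i j t).hasDerivAt⟩
  obtain ⟨P', hP'⟩ : ∃ P' : Matrix (Fin n) (Fin n) ℝ,
      ∀ i j, HasDerivAt (fun s => (Q s)⁻¹ i j) (P' i j) t :=
    ⟨Matrix.of fun i j => deriv (fun s => (Q s)⁻¹ i j) t,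
      fun i j => (aux_inv_diff Q hQdiff hQinv i j t).hasDerivAt⟩
  have hDD : ∀ i j, HasDerivAt (fun s => D s i j)
      ((Matrix.diagonal fun i => deriv (lam i) t) i j) t := by
    intro i j
    simp only [hD]
    by_cases h : i = j
    · subst h
      simpa using (hlamdiff i t).hasDerivAt
    · simpa [Matrix.diagonal_apply_ne _ h] using hasDerivAt_const t (0 : ℝ)
  have hLd := aux_mul (aux_mul hP' hDD) hQ'
  have hLeq : (Matrix.of fun i j => deriv (fun s => L s i j) t) =
      (P' * D t + (Q t)⁻¹ * Matrix.diagonal fun i => deriv (lam i) t) * Q t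
        + ((Q t)⁻¹ * D t) * Q' := by
    ext i j
    simp only [hL, Matrix.of_apply]
    exact (hLd i j).deriv
  have hQP : Q' * (Q t)⁻¹ + Q t * P' = 0 := by
    ext i j
    have h1 := aux_mul hQ' hP' i j
    have h2 : (fun s => (Q s * (Q s)⁻¹) i j) = fun _ => (1 : Matrix (Fin n) (Fin n) ℝ) i j := by
      funext s
      rw [Matrix.mul_nonsing_inv _ (hdet s)]
    rw [h2] at h1
    exact h1.unique (hasDerivAt_const t _)
  have hnn : ∀ i, 0 ≤ lam i t := fun i => by
    rcases lt_or_ge (i : ℕ) m with h | h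
    · exact (hlamzero t i h).ge
    · exact (hlampos t i h).le
  have key : ∀ δ : ℝ, 0 < δ → Matrix.trace
          ((Matrix.of fun i j => deriv (fun s => L s i j) t) *
            (L t + δ • (1 : Matrix (Fin n) (Fin n) ℝ))⁻¹) =
      ∑ i, deriv (lam i) t / (lam i t + δ) := by
    intro δ hδ
    have hne : ∀ i, lam i t + δ ≠ 0 := fun i => (add_pos_of_nonneg_of_pos (hnn i) hδ).ne'
    set E : Matrix (Fin n) (Fin n) ℝ := Matrix.diagonal fun i => (lam i t + δ)⁻¹ with hE
    have hQ1 : Q t * (Q t)⁻¹ = 1 := Matrix.mul_nonsing_inv _ (hdet t)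
    have hQ2 : (Q t)⁻¹ * Q t = 1 := Matrix.nonsing_inv_mul _ (hdet t)
    have hDE : (D t + δ • (1 : Matrix (Fin n) (Fin n) ℝ)) * E = 1 := by
      rw [hD, Matrix.smul_one_eq_diagonal, Matrix.diagonal_add, hE, Matrix.diagonal_mul_diagonal,
        ← Matrix.diagonal_one]
      congr 1
      funext i
      exact mul_inv_cancel₀ (hne i)
    have hcomm : D t * E = E * D t := by
      rw [hD, hE, Matrix.diagonal_mul_diagonal, Matrix.diagonal_mul_diagonal]
      simp only [mul_comm]
    have hinv : (L t + δ • (1 : Matrix (Fin n) (Fin n) ℝ))⁻¹ = (Q t)⁻¹ * E * Q t := by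
      apply Matrix.inv_eq_right_inv
      have : L t + δ • (1 : Matrix (Fin n) (Fin n) ℝ)
          = (Q t)⁻¹ * (D t + δ • (1 : Matrix (Fin n) (Fin n) ℝ)) * Q t := by
        rw [hL, Matrix.mul_add, Matrix.add_mul, Matrix.mul_smul, Matrix.smul_mul, Matrix.mul_one,
          hQ2]
      rw [this]
      calc _ = (Q t)⁻¹ * (D t + δ • (1 : Matrix (Fin n) (Fin n) ℝ)) * (Q t * (Q t)⁻¹) * E * Q t := by
            simp only [Matrix.mul_assoc]
        _ = (Q t)⁻¹ * ((D t + δ • (1 : Matrix (Fin n) (Fin n) ℝ)) * E) * Q t := by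
            rw [hQ1, Matrix.mul_one]; simp only [Matrix.mul_assoc]
        _ = 1 := by rw [hDE, Matrix.mul_one, hQ2]
    set F : Matrix (Fin n) (Fin n) ℝ := Matrix.diagonal fun i => deriv (lam i) t with hF
    rw [hLeq, hinv]
    have e1 : (((P' * D t + (Q t)⁻¹ * F) * Q t + (Q t)⁻¹ * D t * Q') * ((Q t)⁻¹ * E * Q t)).trace
        = ((Q t * P') * (D t * E)).trace + (F * E).trace + ((Q' * (Q t)⁻¹) * (D t * E)).trace := by
      have a1 : ((Q t * P') * (D t * E)).trace
          = (P' * D t * Q t * ((Q t)⁻¹ * E * Q t)).trace := by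
        have : P' * D t * Q t * ((Q t)⁻¹ * E * Q t) = P' * (D t * E) * Q t := by
          calc _ = P' * D t * (Q t * (Q t)⁻¹) * E * Q t := by simp only [Matrix.mul_assoc]
            _ = _ := by rw [hQ1, Matrix.mul_one]; simp only [Matrix.mul_assoc]
        rw [this, Matrix.trace_mul_comm _ (Q t)]
        simp only [Matrix.mul_assoc]
      have a2 : (F * E).trace = ((Q t)⁻¹ * F * Q t * ((Q t)⁻¹ * E * Q t)).trace := by
        have : (Q t)⁻¹ * F * Q t * ((Q t)⁻¹ * E * Q t) = (Q t)⁻¹ * (F * E) * Q t := by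
          calc _ = (Q t)⁻¹ * F * (Q t * (Q t)⁻¹) * E * Q t := by simp only [Matrix.mul_assoc]
            _ = _ := by rw [hQ1, Matrix.mul_one]; simp only [Matrix.mul_assoc]
        rw [this, Matrix.trace_mul_comm _ (Q t), ← Matrix.mul_assoc, hQ1, Matrix.one_mul]
      have a3 : ((Q' * (Q t)⁻¹) * (D t * E)).trace
          = ((Q t)⁻¹ * D t * Q' * ((Q t)⁻¹ * E * Q t)).trace := by
        have : Q' * ((Q t)⁻¹ * E * Q t) * ((Q t)⁻¹ * D t) = (Q' * (Q t)⁻¹) * (D t * E) := by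
          calc _ = Q' * (Q t)⁻¹ * E * (Q t * (Q t)⁻¹) * D t := by simp only [Matrix.mul_assoc]
            _ = _ := by rw [hQ1, Matrix.mul_one, hcomm]; simp only [Matrix.mul_assoc]
        rw [Matrix.mul_assoc ((Q t)⁻¹ * D t) Q', Matrix.trace_mul_comm ((Q t)⁻¹ * D t), this]
      rw [a1, a2, a3, ← Matrix.trace_add, ← Matrix.trace_add, Matrix.add_mul, Matrix.add_mul,
        Matrix.add_mul]
    rw [e1]
    have e2 : ((Q t * P') * (D t * E)).trace + ((Q' * (Q t)⁻¹) * (D t * E)).trace = 0 := by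
      rw [← Matrix.trace_add, ← Matrix.add_mul, add_comm, hQP, Matrix.zero_mul, Matrix.trace_zero]
    have e3 : (F * E).trace = ∑ i, deriv (lam i) t / (lam i t + δ) := by
      rw [hF, hE, Matrix.diagonal_mul_diagonal, Matrix.trace_diagonal]
      simp only [div_eq_mul_inv]
    linarith
  have hR : deriv (fun s => Real.log
          (∏ i ∈ Finset.univ.filter (fun i : Fin n => m ≤ (i : ℕ)), lam i s)) t
      = ∑ i : Fin n, if m ≤ (i : ℕ) then deriv (lam i) t / lam i t else 0 := by
    have h1 : (fun s => Real.log
          (∏ i ∈ Finset.univ.filter (fun i : Fin n => m ≤ (i : ℕ)), lam i s))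
        = fun s => ∑ i ∈ Finset.univ.filter (fun i : Fin n => m ≤ (i : ℕ)),
            Real.log (lam i s) := by
      funext s
      refine Real.log_prod fun i hi => ?_
      exact (hlampos s i (Finset.mem_filter.1 hi).2).ne'
    rw [h1, ← Finset.sum_filter]
    refine HasDerivAt.deriv (HasDerivAt.fun_sum fun i hi => ?_)
    exact (hlamdiff i t).hasDerivAt.log (hlampos t i (Finset.mem_filter.1 hi).2).ne'
  rw [hR]
  refine Tendsto.congr' (f₁ := fun δ => ∑ i, deriv (lam i) t / (lam i t + δ)) ?_ ?_
  · filter_upwards [self_mem_nhdsWithin] with δ hδ using (key δ hδ).symm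
  · refine tendsto_finsetSum _ fun i _ => ?_
    split_ifs with h
    · have hc : ContinuousAt (fun δ : ℝ => deriv (lam i) t / (lam i t + δ)) 0 := by
        refine ContinuousAt.div (by fun_prop) (by fun_prop) ?_
        simpa using (hlampos t i h).ne'
      have := hc.tendsto
      simp only [add_zero] at this
      exact this.mono_left nhdsWithin_le_nhds
    · have : lam i = fun _ => 0 := by
        funext s
        exact hlamzero s i (not_le.1 h)
      simp [this]
end

section
/- A finite connected simple graph G = (V,E) with E ≠ ∅ is strongly symmetric if and only if for every m ∈ ℕ, the number p_m(i,j) of walks of length m between vertices i and j depends only on the graph distance L(i,j): that is, for all vertices i, j, v, w with L(i,j) = L(v,w) and all m ∈ ℕ, the number of walks of length m from i to j equals the number of walks of length m from v to w. -/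
/-- `alphaNum G s i j` is the number of neighbors `k` of `i` with `dist k j = s`. -/
noncomputable def alphaNum {V : Type*} (G : SimpleGraph V) (s : ℕ) (i j : V) : ℕ :=
  Set.ncard {k : V | G.Adj i k ∧ G.dist k j = s}

/-- A graph is strongly symmetric if `alphaNum G s i j` depends only on `s` and `dist i j`. -/
def StronglySymmetric {V : Type*} (G : SimpleGraph V) : Prop :=
  ∀ (s : ℕ) (i j v w : V), G.dist i j = G.dist v w → alphaNum G s i j = alphaNum G s v w

open Classical in
lemma walkCard_succ {V : Type*} [Fintype V] (G : SimpleGraph V) (m : ℕ) (i j : V) :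
    Nat.card {p : G.Walk i j // p.length = m + 1} =
      ∑ k ∈ Finset.univ.filter (fun k => G.Adj i k),
        Nat.card {p : G.Walk k j // p.length = m} := by
  have key : ∀ (n : ℕ) (u v : V), Nat.card {p : G.Walk u v // p.length = n} =
      (G.adjMatrix ℕ ^ n) u v := by
    intro n u v
    rw [SimpleGraph.adjMatrix_pow_apply_eq_card_walk, ← Nat.card_eq_fintype_card]
    rfl
  simp only [key, pow_succ', SimpleGraph.adjMatrix_mul_apply]
  apply Finset.sum_congr _ (fun _ _ => rfl)
  ext k; simp

open Classical in
lemma walkCard_sum {V : Type*} [Fintype V] (G : SimpleGraph V) (m : ℕ) (f : ℕ → ℕ)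
    (hf : ∀ i j : V, Nat.card {p : G.Walk i j // p.length = m} = f (G.dist i j)) (i j : V) :
    Nat.card {p : G.Walk i j // p.length = m + 1} =
      ∑ s ∈ Finset.univ.image (fun q : V × V => G.dist q.1 q.2), alphaNum G s i j * f s := by
  rw [walkCard_succ, ← Finset.sum_fiberwise_of_maps_to
    (t := Finset.univ.image (fun q : V × V => G.dist q.1 q.2)) (g := fun k => G.dist k j)]
  · apply Finset.sum_congr rfl
    intro s _
    rw [Finset.sum_congr rfl (g := fun _ => f s)]
    · rw [Finset.sum_const, smul_eq_mul, alphaNum, ← Set.ncard_coe_finset]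
      congr 2
      ext k; simp
    · intro k hk
      rw [hf, (Finset.mem_filter.1 hk).2]
  · intro k _
    exact Finset.mem_image.2 ⟨(k, j), Finset.mem_univ _, rfl⟩

lemma exists_factor {V : Type*} (G : SimpleGraph V) (P : V → V → ℕ)
    (h : ∀ i j v w, G.dist i j = G.dist v w → P i j = P v w) :
    ∃ f : ℕ → ℕ, ∀ i j, P i j = f (G.dist i j) := by
  classical
  refine ⟨fun s => if h : ∃ q : V × V, G.dist q.1 q.2 = s then
    P h.choose.1 h.choose.2 else 0, fun i j => ?_⟩
  have hex : ∃ q : V × V, G.dist q.1 q.2 = G.dist i j := ⟨(i, j), rfl⟩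
  simp only [dif_pos hex]
  exact h _ _ _ _ hex.choose_spec.symm

theorem stronglySymmetric_iff_walkCount
    {V : Type*} [Fintype V] (G : SimpleGraph V)
    (hconn : G.Connected) (hE : ∃ a b : V, G.Adj a b) :
    StronglySymmetric G ↔
      ∀ (m : ℕ) (i j v w : V), G.dist i j = G.dist v w →
        Nat.card {p : G.Walk i j // p.length = m} =
          Nat.card {p : G.Walk v w // p.length = m} := by
  classical
  constructor
  · intro hS m
    induction m with
    | zero =>
      intro i j v w h
      have key : ∀ a b : V, Nat.card {p : G.Walk a b // p.length = 0} =
          if G.dist a b = 0 then 1 else 0 := by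
        intro a b
        split_ifs with h0
        · obtain rfl := hconn.dist_eq_zero_iff.1 h0
          rw [Nat.card_eq_one_iff_unique]
          refine ⟨⟨?_⟩, ⟨⟨SimpleGraph.Walk.nil, rfl⟩⟩⟩
          rintro ⟨p, hp⟩ ⟨q, hq⟩
          apply Subtype.ext
          rw [SimpleGraph.Walk.length_eq_zero_iff] at hp hq
          exact hp.eq_nil.trans hq.eq_nil.symm
        · have : IsEmpty {p : G.Walk a b // p.length = 0} :=
            ⟨fun p => h0 (Nat.le_zero.1 (p.2 ▸ SimpleGraph.dist_le p.1))⟩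
          exact Nat.card_of_isEmpty
      rw [key, key, h]
    | succ m ih =>
      intro i j v w h
      obtain ⟨f, hf⟩ := exists_factor G _ ih
      rw [walkCard_sum G m f hf, walkCard_sum G m f hf]
      exact Finset.sum_congr rfl fun s _ => by rw [hS s i j v w h]
  · intro hP s
    induction s using Nat.strong_induction_on with
    | _ s ih =>
      intro i j v w h
      by_cases hs : s ∈ Finset.univ.image (fun q : V × V => G.dist q.1 q.2)
      · obtain ⟨f, hf⟩ := exists_factor G _ (hP s)
        have h1 := hP (s + 1) i j v w h
        rw [walkCard_sum G s f hf, walkCard_sum G s f hf, ← Finset.add_sum_erase _ _ hs,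
          ← Finset.add_sum_erase _ _ hs] at h1
        have h2 : ∀ t ∈ (Finset.univ.image (fun q : V × V => G.dist q.1 q.2)).erase s,
            alphaNum G t i j * f t = alphaNum G t v w * f t := by
          intro t ht
          obtain ⟨hne, ht⟩ := Finset.mem_erase.1 ht
          rcases lt_or_gt_of_ne hne with hlt | hgt
          · rw [ih t hlt i j v w h]
          · obtain ⟨⟨x, y⟩, -, hxy⟩ := Finset.mem_image.1 ht
            simp only at hxy
            have : IsEmpty {p : G.Walk x y // p.length = s} :=
              ⟨fun p => by have := SimpleGraph.dist_le p.1; have := p.2; omega⟩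
            have h0 : f t = 0 := by rw [← hxy, ← hf]; exact Nat.card_of_isEmpty
            simp [h0]
        rw [Finset.sum_congr rfl h2] at h1
        have h3 := Nat.add_right_cancel h1
        refine Nat.eq_of_mul_eq_mul_right ?_ h3
        obtain ⟨⟨x, y⟩, -, hxy⟩ := Finset.mem_image.1 hs
        simp only at hxy
        obtain ⟨p, hp⟩ := hconn.exists_walk_length_eq_dist x y
        have hfs := hf x y
        rw [hxy] at hfs hp
        rw [← hfs]
        have : Nonempty {p : G.Walk x y // p.length = s} := ⟨⟨p, hp⟩⟩
        exact Nat.card_pos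
      · have key : ∀ a b : V, alphaNum G s a b = 0 := by
          intro a b
          rw [alphaNum, Set.ncard_eq_zero]
          ext k
          simp only [Set.mem_ofPred_eq, Set.mem_empty_iff_false, iff_false]
          rintro ⟨-, hk⟩
          exact hs (Finset.mem_image.2 ⟨(k, b), Finset.mem_univ _, hk⟩)
        rw [key, key]
end

section
/- Let G be a finite connected strongly symmetric simple graph with E ≠ ∅ and adjacency matrix A. Then for every m ∈ ℕ, the entries of A^m depend only on the graph distance: for all vertices i, j, v, w with L(i,j) = L(v,w), one has (A^m)_{ij} = (A^m)_{vw}. -/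
open Matrix

/-- For a finite connected strongly symmetric graph with adjacency matrix `A`, the entries of
`A ^ m` depend only on the graph distance of the indexing vertices. -/
theorem adjMatrix_pow_dep_only_on_dist
    {V : Type*} [Fintype V] [DecidableEq V] (G : SimpleGraph V) [DecidableRel G.Adj]
    (hconn : G.Connected) (hE : ∃ a b : V, G.Adj a b)
    (hsym : StronglySymmetric G) :
    ∀ (m : ℕ) (i j v w : V), G.dist i j = G.dist v w →
      (G.adjMatrix ℝ ^ m) i j = (G.adjMatrix ℝ ^ m) v w := by
  intro m
  induction m with
  | zero =>
    intro i j v w h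
    have key : i = j ↔ v = w := by
      rw [← hconn.dist_eq_zero_iff, ← hconn.dist_eq_zero_iff, h]
    simp [Matrix.one_apply, key]
  | succ m ih =>
    obtain ⟨f, hf⟩ : ∃ f : ℕ → ℝ, ∀ i j, (G.adjMatrix ℝ ^ m) i j = f (G.dist i j) := by
      classical
      refine ⟨fun s => if h : ∃ p : V × V, G.dist p.1 p.2 = s then
        (G.adjMatrix ℝ ^ m) h.choose.1 h.choose.2 else 0, fun i j => ?_⟩
      have h : ∃ p : V × V, G.dist p.1 p.2 = G.dist i j := ⟨(i, j), rfl⟩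
      beta_reduce
      rw [dif_pos h]
      exact (ih _ _ _ _ h.choose_spec).symm
    have hmain : ∀ i j, (G.adjMatrix ℝ ^ (m + 1)) i j =
        ∑ s ∈ (Finset.univ : Finset (V × V)).image (fun p => G.dist p.1 p.2),
          (alphaNum G s i j : ℝ) * f s := by
      intro i j
      rw [pow_succ', SimpleGraph.adjMatrix_mul_apply]
      rw [← Finset.sum_fiberwise_of_maps_to (s := G.neighborFinset i)
        (t := (Finset.univ : Finset (V × V)).image (fun p => G.dist p.1 p.2))
        (g := fun k => G.dist k j)
        (fun k _ => Finset.mem_image.2 ⟨(k, j), Finset.mem_univ _, rfl⟩)]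
      refine Finset.sum_congr rfl fun s _ => ?_
      have hc : alphaNum G s i j =
          ((G.neighborFinset i).filter (fun k => G.dist k j = s)).card := by
        rw [alphaNum, ← Set.ncard_coe_finset]
        congr 1
        ext k
        simp
      rw [hc, ← nsmul_eq_mul]
      refine Finset.sum_eq_card_nsmul fun k hk => ?_
      rw [hf, (Finset.mem_filter.1 hk).2]
    intro i j v w h
    rw [hmain, hmain]
    refine Finset.sum_congr rfl fun s _ => ?_
    rw [hsym s i j v w h]
end

section
/- Let G be a finite connected strongly symmetric simple graph on n vertices with E ≠ ∅ and adjacency matrix A, and let y ∈ ℂ be fixed. Then for all but finitely many x ∈ ℂ, the matrix B(x,y) := x·I + y·A is invertible and the entries of B(x,y)⁻¹ = (c_ij) depend only on the graph distance L(i,j): if L(i,j) = L(v,w) then c_ij = c_vw. In particular there are values x₀(x,y) and x₁(x,y) such that c_ii = x₀(x,y) for every vertex i and c_ij = x₁(x,y) for every edge (i,j) ∈ E. -/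
open Matrix

/-- The matrices whose entries depend only on the graph distance. -/
def distSub {n : ℕ} (G : SimpleGraph (Fin n)) : Submodule ℂ (Matrix (Fin n) (Fin n) ℂ) where
  carrier := {M | ∀ i j v w : Fin n, G.dist i j = G.dist v w → M i j = M v w}
  add_mem' := by
    intro a b ha hb i j v w h
    simp only [Matrix.add_apply, ha i j v w h, hb i j v w h]
  zero_mem' := by intro i j v w h; rfl
  smul_mem' := by
    intro c a ha i j v w h
    simp only [Matrix.smul_apply, ha i j v w h]

lemma adj_mul_mem {n : ℕ} (G : SimpleGraph (Fin n)) [DecidableRel G.Adj]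
    (hsym : StronglySymmetric G) (M : Matrix (Fin n) (Fin n) ℂ) (hM : M ∈ distSub G) :
    G.adjMatrix ℂ * M ∈ distSub G := by
  classical
  obtain ⟨f, hf⟩ : ∃ f : ℕ → ℂ, ∀ i j, M i j = f (G.dist i j) := by
    refine ⟨Function.extend (fun p : Fin n × Fin n => G.dist p.1 p.2)
      (fun p => M p.1 p.2) 0, fun i j => ?_⟩
    have hfac : Function.FactorsThrough (fun p : Fin n × Fin n => M p.1 p.2)
        (fun p : Fin n × Fin n => G.dist p.1 p.2) := fun p q h => hM _ _ _ _ h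
    exact (hfac.extend_apply 0 (i, j)).symm
  have key : ∀ i j, (G.adjMatrix ℂ * M) i j =
      ∑ s ∈ (Finset.univ : Finset (Fin n × Fin n)).image (fun p => G.dist p.1 p.2),
        (alphaNum G s i j : ℂ) * f s := by
    intro i j
    rw [SimpleGraph.adjMatrix_mul_apply]
    rw [← Finset.sum_fiberwise_of_maps_to (g := fun k => G.dist k j)
      (t := (Finset.univ : Finset (Fin n × Fin n)).image (fun p => G.dist p.1 p.2))
      (fun k _ => Finset.mem_image.2 ⟨(k, j), Finset.mem_univ _, rfl⟩)]
    refine Finset.sum_congr rfl fun s _ => ?_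
    have hc : alphaNum G s i j = ((G.neighborFinset i).filter (fun k => G.dist k j = s)).card := by
      rw [alphaNum, ← Set.ncard_coe_finset]
      congr 1
      ext k
      simp
    rw [hc, ← nsmul_eq_mul, ← Finset.sum_const]
    refine Finset.sum_congr rfl fun k hk => ?_
    rw [hf, (Finset.mem_filter.1 hk).2]
  intro i j v w h
  rw [key, key]
  exact Finset.sum_congr rfl fun s _ => by rw [hsym s i j v w h]

/-- For a finite connected strongly symmetric graph on `n` vertices with adjacency matrix `A`
and fixed `y ∈ ℂ`, for all but finitely many `x ∈ ℂ` the matrix `B(x,y) = x·I + y·A` is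
invertible and the entries of its inverse depend only on the graph distance; in particular the
diagonal entries of the inverse share a common value `x₀` and the entries indexed by edges share
a common value `x₁`. -/
theorem inv_of_xI_add_yAdj_dep_only_on_dist
    (n : ℕ) (G : SimpleGraph (Fin n)) [DecidableRel G.Adj]
    (hconn : G.Connected) (hE : ∃ a b : Fin n, G.Adj a b)
    (hsym : StronglySymmetric G) (y : ℂ)
    (B : ℂ → Matrix (Fin n) (Fin n) ℂ)
    (hB : ∀ x : ℂ, B x = x • (1 : Matrix (Fin n) (Fin n) ℂ) + y • G.adjMatrix ℂ) :
    ∃ S : Finset ℂ, ∀ x : ℂ, x ∉ S →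
      IsUnit (B x) ∧
      (∀ i j v w : Fin n, G.dist i j = G.dist v w → (B x)⁻¹ i j = (B x)⁻¹ v w) ∧
      (∃ x₀ x₁ : ℂ, (∀ i : Fin n, (B x)⁻¹ i i = x₀) ∧
        ∀ i j : Fin n, G.Adj i j → (B x)⁻¹ i j = x₁) := by
  classical
  refine ⟨(y • G.adjMatrix ℂ * (-1)).charpoly.roots.toFinset, fun x hx => ?_⟩
  have hU : IsUnit (B x) := by
    rw [Matrix.isUnit_iff_isUnit_det, isUnit_iff_ne_zero]
    intro h0
    apply hx
    rw [Multiset.mem_toFinset, Polynomial.mem_roots (Matrix.charpoly_monic _).ne_zero,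
      Polynomial.IsRoot, Matrix.eval_charpoly, ← h0, hB]
    congr 1
    rw [mul_neg, mul_one, sub_neg_eq_add, Matrix.smul_one_eq_diagonal, Matrix.scalar_apply]
  have hdist : ∀ i j v w : Fin n, G.dist i j = G.dist v w → (B x)⁻¹ i j = (B x)⁻¹ v w := by
    have h1 : (1 : Matrix (Fin n) (Fin n) ℂ) ∈ distSub G := by
      intro i j v w h
      have : i = j ↔ v = w := by
        rw [← hconn.dist_eq_zero_iff, ← hconn.dist_eq_zero_iff, h]
      simp [Matrix.one_apply, this]
    have hmem : ∀ M ∈ distSub G, LinearMap.mulLeft ℂ (B x) M ∈ distSub G := by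
      intro M hM
      rw [LinearMap.mulLeft_apply, hB, add_mul, smul_mul_assoc, smul_mul_assoc, one_mul]
      exact (distSub G).add_mem ((distSub G).smul_mem _ hM)
        ((distSub G).smul_mem _ (adj_mul_mem G hsym M hM))
    have hinj : Function.Injective ((LinearMap.mulLeft ℂ (B x)).restrict hmem) := by
      intro a b hab
      apply Subtype.ext
      have := congrArg Subtype.val hab
      exact hU.mul_left_cancel this
    obtain ⟨C, hC⟩ := LinearMap.surjective_of_injective hinj ⟨1, h1⟩
    have hC' : B x * C.1 = 1 := congrArg Subtype.val hC
    rw [Matrix.inv_eq_right_inv hC']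
    exact C.2
  refine ⟨hU, hdist, ?_⟩
  obtain ⟨a, b, hab⟩ := hE
  refine ⟨(B x)⁻¹ a a, (B x)⁻¹ a b, fun i => hdist _ _ _ _ (by simp), fun i j hij => ?_⟩
  apply hdist
  rw [SimpleGraph.dist_eq_one_iff_adj.2 hij, SimpleGraph.dist_eq_one_iff_adj.2 hab]
end

section
/- Let n ≥ 2 and c = 2/√3. Let L : ℝ → Matrix (Fin n) (Fin n) ℝ be a family of symmetric matrices, differentiable at ε = 0, such that: (1) every row of L(ε) sums to zero for all ε; (2) L(0)_ij = −c for all i ≠ j (so L(0)_ii = (n−1)·c); (3) L(ε)_ij < 0 for all i ≠ j and all ε in a neighborhood of 0; and (4) tr(L'(0)) = 0. Let J denote the n×n all-ones matrix. Then the function ε ↦ det(L(ε) + n⁻¹·J), which for ε near 0 equals the product of the nonzero eigenvalues of L(ε), has derivative zero at ε = 0. -/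
open Matrix

/-- Jacobi's formula. -/
theorem hasDerivAt_det_jacobi {n : ℕ} (M : ℝ → Matrix (Fin n) (Fin n) ℝ)
    (M' : Matrix (Fin n) (Fin n) ℝ) (x : ℝ)
    (h : ∀ i j, HasDerivAt (fun t => M t i j) (M' i j) x) :
    HasDerivAt (fun t => (M t).det) ((adjugate (M x) * M').trace) x := by
  have h1 : HasDerivAt (fun t => ∑ σ : Equiv.Perm (Fin n),
      ((Equiv.Perm.sign σ : ℤ) : ℝ) * ∏ i, M t (σ i) i)
      (∑ σ : Equiv.Perm (Fin n), ((Equiv.Perm.sign σ : ℤ) : ℝ) *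
        ∑ i, (∏ j ∈ Finset.univ.erase i, M x (σ j) j) • M' (σ i) i) x := by
    refine HasDerivAt.fun_sum fun σ _ => ?_
    refine HasDerivAt.const_mul _ ?_
    exact HasDerivAt.fun_finsetProd fun i _ => h (σ i) i
  have h2 : (fun t => (M t).det) = fun t => ∑ σ : Equiv.Perm (Fin n),
      ((Equiv.Perm.sign σ : ℤ) : ℝ) * ∏ i, M t (σ i) i := by
    funext t
    exact det_apply' _
  rw [h2]
  convert h1 using 1
  simp only [Finset.mul_sum]
  rw [Finset.sum_comm, trace]
  refine Finset.sum_congr rfl fun i _ => ?_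
  have h3 : (adjugate (M x) * M').diag i = cramer (M x) (fun k => M' k i) i := by
    rw [cramer_eq_adjugate_mulVec]
    rfl
  rw [h3, cramer_apply, det_apply']
  refine Finset.sum_congr rfl fun σ _ => ?_
  rw [← Finset.mul_prod_erase Finset.univ _ (Finset.mem_univ i)]
  rw [Finset.prod_congr rfl (g := fun j => M x (σ j) j)]
  · simp only [updateCol_self, smul_eq_mul]
    ring
  · intro j hj
    exact updateCol_ne (Finset.ne_of_mem_erase hj)

/-- Let `L(ε)` be a family of symmetric matrices, differentiable at `ε = 0`, whose rows sum to
zero, with `L(0)` the cotan-Laplacian of the equilateral triangulation on the complete graph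
(`L(0)_ij = -2/√3` off the diagonal), with negative off-diagonal entries near `ε = 0` and with
`tr L'(0) = 0`. Then `ε ↦ det(L(ε) + n⁻¹ J)`, which near `0` equals the product of the nonzero
eigenvalues of `L(ε)`, has derivative zero at `ε = 0`. -/
theorem deriv_det_modified_laplacian_complete
    (n : ℕ) (hn : 2 ≤ n)
    (L : ℝ → Matrix (Fin n) (Fin n) ℝ)
    (hsymm : ∀ ε : ℝ, (L ε).IsSymm)
    (hdiff : ∀ i j : Fin n, DifferentiableAt ℝ (fun ε => L ε i j) 0)
    (hrow : ∀ (ε : ℝ) (i : Fin n), ∑ j : Fin n, L ε i j = 0)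
    (hL0 : ∀ i j : Fin n, i ≠ j → L 0 i j = -(2 / Real.sqrt 3))
    (hneg : ∀ᶠ ε in nhds (0 : ℝ), ∀ i j : Fin n, i ≠ j → L ε i j < 0)
    (htr : Matrix.trace (Matrix.of fun i j => deriv (fun ε => L ε i j) 0) = 0) :
    HasDerivAt
      (fun ε => Matrix.det
        (L ε + ((n : ℝ))⁻¹ • (Matrix.of fun _ _ => (1 : ℝ))))
      0 0 := by
  have hn0 : (n : ℝ) ≠ 0 := by
    have : n ≠ 0 := by omega
    exact_mod_cast this
  set c : ℝ := 2 / Real.sqrt 3 with hc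
  have hc0 : c ≠ 0 := by
    rw [hc]
    positivity
  set J : Matrix (Fin n) (Fin n) ℝ := Matrix.of fun _ _ => (1 : ℝ) with hJ
  set M' : Matrix (Fin n) (Fin n) ℝ := Matrix.of fun i j => deriv (fun ε => L ε i j) 0 with hM'
  have hJJ : J * J = (n : ℝ) • J := by
    ext i j
    simp [hJ, Matrix.mul_apply]
  have hM0 : L 0 + (n : ℝ)⁻¹ • J = ((n : ℝ) * c) • 1 + ((n : ℝ)⁻¹ - c) • J := by
    ext i j
    by_cases hij : i = j
    · subst hij
      have h1 := hrow 0 i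
      rw [← Finset.add_sum_erase _ _ (Finset.mem_univ i),
        Finset.sum_congr rfl (g := fun _ => -c)
          (fun j hj => hL0 i j (Finset.ne_of_mem_erase hj).symm)] at h1
      rw [Finset.sum_const, Finset.card_erase_of_mem (Finset.mem_univ i), Finset.card_univ,
        Fintype.card_fin, nsmul_eq_mul, Nat.cast_sub (by omega)] at h1
      simp [hJ]
      push_cast at h1
      linarith
    · simp [hJ, hL0 i j hij, hij]
      ring
  have hB : (L 0 + (n : ℝ)⁻¹ • J) *
      (((n : ℝ) * c)⁻¹ • 1 + (-((n : ℝ)⁻¹ - c) * ((n : ℝ) * c)⁻¹) • J) = 1 := by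
    rw [hM0]
    simp only [add_mul, mul_add, smul_mul_smul_comm, hJJ, one_mul, mul_one, smul_smul]
    rw [mul_inv_cancel₀ (mul_ne_zero hn0 hc0), one_smul, add_assoc, ← add_smul, ← add_smul]
    convert add_zero _
    convert zero_smul ℝ J
    field_simp
    ring
  have hadj : adjugate (L 0 + (n : ℝ)⁻¹ • J) = (L 0 + (n : ℝ)⁻¹ • J).det •
      (((n : ℝ) * c)⁻¹ • 1 + (-((n : ℝ)⁻¹ - c) * ((n : ℝ) * c)⁻¹) • J) := by
    have h1 := congrArg (fun X => adjugate (L 0 + (n : ℝ)⁻¹ • J) * X) hB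
    simp only [← mul_assoc, adjugate_mul, mul_one] at h1
    rw [← h1, smul_mul_assoc, one_mul]
  have hrow' : ∀ i, ∑ j, M' i j = 0 := by
    intro i
    have h1 : HasDerivAt (fun ε => ∑ j, L ε i j) (∑ j, M' i j) 0 :=
      HasDerivAt.fun_sum fun j _ => (hdiff i j).hasDerivAt
    simp only [hrow] at h1
    exact h1.unique (hasDerivAt_const _ _)
  have hJM : (J * M').trace = 0 := by
    rw [Matrix.trace_mul_comm]
    simp [Matrix.trace, Matrix.mul_apply, hJ, hrow', -Matrix.of_apply, Matrix.of_apply (fun _ _ => (1 : ℝ))]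
  have key := hasDerivAt_det_jacobi (fun ε => L ε + (n : ℝ)⁻¹ • J) M' 0
    (fun i j =>
      (hdiff i j).hasDerivAt.add_const (((n : ℝ)⁻¹ • J) i j))
  convert key using 1
  simp only [hadj, smul_mul_assoc, add_mul, one_mul, Matrix.trace_smul, Matrix.trace_add, htr, hJM]
  simp
end
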